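/- Hailperin's pq-entailment does not respect conjunction of hypotheses: the singleton {B₁ ∧ ¬B₁} Hailperin-(1/2,1/4)-entails ⊥, but the two-element set {B₁, ¬B₁} does not Hailperin-(1/2,1/4)-entail ⊥; in particular there exists a stochastic valuation μ with Prob_μ(B₁) = Prob_μ(¬B₁) = 1/2 and Prob_μ(⊥) = 0. -/

import Mathlib

open MeasureTheory

/-- Propositional formulas over atoms `B_j`, `j : ℕ`, with `¬` and `→`. -/
inductive PropForm : Type
  | atom : ℕ → PropForm
  | neg : PropForm → PropForm
  | imp : PropForm → PropForm → PropForm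
  deriving DecidableEq

namespace PropForm

def conj (α β : PropForm) : PropForm := neg (imp α (neg β))
def disj (α β : PropForm) : PropForm := imp (neg α) β
def biimp (α β : PropForm) : PropForm := conj (imp α β) (imp β α)
def top : PropForm := imp (atom 0) (atom 0)
def bot : PropForm := neg top

/-- Satisfaction of a formula by a valuation `v : ℕ → Bool` (a subset of ℕ). -/
def sat (v : ℕ → Bool) : PropForm → Prop
  | atom j => v j = true
  | neg α => ¬ sat v α
  | imp α β => sat v α → sat v β

/-- The finite set `B_α` of indices of atoms occurring in `α`. -/
def atoms : PropForm → Finset ℕ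
  | atom j => {j}
  | neg α => atoms α
  | imp α β => atoms α ∪ atoms β

end PropForm

/-- `⊨ α`: every valuation satisfies `α`. -/
def Valid (α : PropForm) : Prop := ∀ v, PropForm.sat v α

/-- `α ⊨ β`. -/
def Entails (α β : PropForm) : Prop := ∀ v, PropForm.sat v α → PropForm.sat v β

/-- `Δ ⊨ α`. -/
def SetEntails (Δ : Set PropForm) (α : PropForm) : Prop :=
  ∀ v, (∀ δ ∈ Δ, PropForm.sat v δ) → PropForm.sat v α

/-- Conjunction of a list of formulas (empty conjunction is `⊤`). -/
def bigConj (l : List PropForm) : PropForm := l.foldr PropForm.conj PropForm.top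

/-- Disjunction of a list of formulas (empty disjunction is `⊥`). -/
def bigDisj (l : List PropForm) : PropForm := l.foldr PropForm.disj PropForm.bot

/-- `φ_A^U = (⋀_{j∈U} B_j) ∧ (⋀_{j∈A∖U} ¬B_j)`. -/
def phi (A U : Finset ℕ) : PropForm :=
  PropForm.conj (bigConj ((U.sort (· ≤ ·)).map PropForm.atom))
    (bigConj (((A \ U).sort (· ≤ ·)).map (fun j => PropForm.neg (PropForm.atom j))))

/-- The space of valuations, `2^ℕ` identified with `{0,1}^ℕ`, with the product σ-algebra. -/
abbrev Val := ℕ → Bool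

/-- `v ∩ A` for a valuation `v` and a finite `A ⊆ ℕ`. -/
def restrict (v : Val) (A : Finset ℕ) : Finset ℕ := A.filter (fun j => v j = true)

/-- `Prob_μ(α) = μ{v : v ⊨ α}`. -/
noncomputable def Prob (μ : Measure Val) (α : PropForm) : ℝ :=
  (μ {v | PropForm.sat v α}).toReal

/-- Hailperin's `(p,q)`-entailment: every stochastic valuation giving probability at least
`p` to each hypothesis gives probability at least `q` to the conclusion. -/
def hailperinEntails (Δ : Set PropForm) (α : PropForm) (p q : ℝ) : Prop :=
  ∀ μ : MeasureTheory.Measure Val, IsProbabilityMeasure μ →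
    (∀ δ ∈ Δ, p ≤ Prob μ δ) → q ≤ Prob μ α

theorem hailperin_bot_prob (μ : Measure Val) : Prob μ PropForm.bot = 0 := by
  simp [Prob, PropForm.bot, PropForm.top, PropForm.sat]

theorem hailperin_half_measure : ∃ μ : MeasureTheory.Measure Val, IsProbabilityMeasure μ ∧
      Prob μ (PropForm.atom 1) = 1/2 ∧
      Prob μ (PropForm.neg (PropForm.atom 1)) = 1/2 ∧
      Prob μ PropForm.bot = 0 := by
  have hm : MeasurableSet {v : Val | v 1 = true} :=
    (measurable_pi_apply (X := fun _ : ℕ => Bool) 1) (measurableSet_singleton true)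
  have hm' : MeasurableSet {v : Val | v 1 = false} :=
    (measurable_pi_apply (X := fun _ : ℕ => Bool) 1) (measurableSet_singleton false)
  refine ⟨(2⁻¹ : ENNReal) • Measure.dirac (fun _ => true) +
    (2⁻¹ : ENNReal) • Measure.dirac (fun _ => false), ⟨?_⟩, ?_, ?_, hailperin_bot_prob _⟩
  · simp [ENNReal.inv_two_add_inv_two]
  · simp [Prob, PropForm.sat, Measure.dirac_apply' _ hm]
  · simp [Prob, PropForm.sat, Measure.dirac_apply' _ hm']

/-- `{B₁ ∧ ¬B₁}` Hailperin-(1/2,1/4)-entails `⊥`, but `{B₁, ¬B₁}` does not;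
in particular there is a stochastic valuation `μ` with
`Prob_μ(B₁) = Prob_μ(¬B₁) = 1/2` and `Prob_μ(⊥) = 0`. -/
theorem hailperin_not_conjunctive :
    hailperinEntails {PropForm.conj (PropForm.atom 1) (PropForm.neg (PropForm.atom 1))}
      PropForm.bot (1/2) (1/4) ∧
    ¬ hailperinEntails {PropForm.atom 1, PropForm.neg (PropForm.atom 1)}
      PropForm.bot (1/2) (1/4) ∧
    ∃ μ : MeasureTheory.Measure Val, IsProbabilityMeasure μ ∧
      Prob μ (PropForm.atom 1) = 1/2 ∧
      Prob μ (PropForm.neg (PropForm.atom 1)) = 1/2 ∧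
      Prob μ PropForm.bot = 0 := by
  refine ⟨?_, ?_, hailperin_half_measure⟩
  · intro μ _ h
    have h1 := h _ rfl
    simp [Prob, PropForm.conj, PropForm.sat] at h1
    norm_num at h1
  · intro h
    obtain ⟨μ, hμ, h1, h2, h3⟩ := hailperin_half_measure
    have := h μ hμ (by
      intro δ hδ
      rcases hδ with rfl | rfl
      · exact h1.ge
      · exact h2.ge)
    rw [h3] at this
    norm_num at this
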